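/- Let A = {a, b, c} be a three-letter alphabet and, for n ≥ 1, let u_n = (bc)^n (a(bc)^n)^n and v_n = (bc)^n b (a(bc)^n)^n. Then: (1) the ranker X_a Y_b X_c is condensed on u_n, and it is defined but not condensed on v_n; (2) u_n and v_n agree on rankers from uR^X_{3,n}, i.e., every ranker of uR^X_{3,n} is defined on u_n if and only if it is defined on v_n; (3) the ranker X_a Y_c X_b Y_a is defined on u_n but not on v_n. -/

import Mathlib

namespace RankerPaper

variable {A : Type*} [DecidableEq A]

/-- Letters of rankers: `X a` ("next `a` to the right") and `Y a` ("next `a` to the left"). -/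
inductive RLetter (A : Type*) where
  | X : A → RLetter A
  | Y : A → RLetter A
  deriving DecidableEq

/-- Least `a`-position of `u` strictly greater than `q` (positions are 1-indexed). -/
def nextOcc (u : List A) (a : A) (q : ℕ) : Option ℕ :=
  ((List.range (u.length + 2)).filter (fun i => decide (q < i ∧ u[i-1]? = some a))).head?

/-- Greatest `a`-position of `u` strictly less than `q` (positions are 1-indexed). -/
def prevOcc (u : List A) (a : A) (q : ℕ) : Option ℕ :=
  ((List.range (u.length + 2)).filter
    (fun i => decide (1 ≤ i ∧ i < q ∧ u[i-1]? = some a))).getLast?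

/-- One evaluation step of a ranker letter from position `q`. -/
def stepR (u : List A) : RLetter A → ℕ → Option ℕ
  | .X a, q => nextOcc u a q
  | .Y a, q => prevOcc u a q

/-- Evaluation of a ranker from position `q`, processing letters left to right. -/
def evalFrom (u : List A) : List (RLetter A) → ℕ → Option ℕ
  | [], q => some q
  | z :: r, q => (stepR u z q).bind (evalFrom u r)

/-- Starting position: `0` for an `X`-letter, `|u|+1` for a `Y`-letter. -/
def startPos (u : List A) : RLetter A → ℕ
  | .X _ => 0
  | .Y _ => u.length + 1

/-- The position `r(u)` defined by the ranker `r` on `u` (`none` if undefined;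
empty rankers are considered undefined, rankers being nonempty words). -/
def evalR (u : List A) (r : List (RLetter A)) : Option ℕ :=
  match r with
  | [] => none
  | z :: t => evalFrom u (z :: t) (startPos u z)

/-- `r` is defined on `u`. -/
def Defined (u : List A) (r : List (RLetter A)) : Prop := (evalR u r).isSome

/-- The position `r(u)` (defaulting to `0` when undefined). -/
def pos (u : List A) (r : List (RLetter A)) : ℕ := (evalR u r).getD 0

/-- Do two ranker letters have the same direction? -/
def sameDir : RLetter A → RLetter A → Bool
  | .X _, .X _ => true
  | .Y _, .Y _ => true
  | _, _ => false

/-- Number of (alternating) blocks of a ranker. -/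
def numBlocks : List (RLetter A) → ℕ
  | [] => 0
  | [_] => 1
  | z :: w :: t => (if sameDir z w then 0 else 1) + numBlocks (w :: t)

def startsX (r : List (RLetter A)) : Prop := ∃ a t, r = RLetter.X a :: t
def startsY (r : List (RLetter A)) : Prop := ∃ a t, r = RLetter.Y a :: t
def endsX (r : List (RLetter A)) : Prop := ∃ a, r.getLast? = some (RLetter.X a)
def endsY (r : List (RLetter A)) : Prop := ∃ a, r.getLast? = some (RLetter.Y a)

/-- `R^X_{m,n}`: rankers with exactly `m` blocks, depth `n`, starting with an `X`-block. -/
def RX (m n : ℕ) (r : List (RLetter A)) : Prop :=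
  numBlocks r = m ∧ r.length = n ∧ startsX r

/-- `R^Y_{m,n}`: rankers with exactly `m` blocks, depth `n`, starting with a `Y`-block. -/
def RY (m n : ℕ) (r : List (RLetter A)) : Prop :=
  numBlocks r = m ∧ r.length = n ∧ startsY r

/-- `uR^X_{m,n}`. -/
def uRX (m n : ℕ) (r : List (RLetter A)) : Prop :=
  (∃ m' n', m' ≤ m ∧ n' ≤ n ∧ RX m' n' r) ∨ (∃ m' n', m' < m ∧ n' < n ∧ RY m' n' r)

/-- `uR^Y_{m,n}`. -/
def uRY (m n : ℕ) (r : List (RLetter A)) : Prop :=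
  (∃ m' n', m' ≤ m ∧ n' ≤ n ∧ RY m' n' r) ∨ (∃ m' n', m' < m ∧ n' < n ∧ RX m' n' r)

/-- `uR_{m,n} = uR^X_{m,n} ∪ uR^Y_{m,n}`. -/
def uR (m n : ℕ) (r : List (RLetter A)) : Prop := uRX m n r ∨ uRY m n r

/-- `uR^X_m = ∪_{n ≥ m} uR^X_{m,n}`. -/
def uRXm (m : ℕ) (r : List (RLetter A)) : Prop := ∃ n, m ≤ n ∧ uRX m n r

/-- `uR^Y_m = ∪_{n ≥ m} uR^Y_{m,n}`. -/
def uRYm (m : ℕ) (r : List (RLetter A)) : Prop := ∃ n, m ≤ n ∧ uRY m n r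

/-- `r = Z₁ ⋯ Z_n` is condensed on `u`: it is defined on `u` and there is a chain of
open intervals `(0;|u|+1) = (i₀;j₀) ⊃ (i₁;j₁) ⊃ ⋯ ⊃ (i_{n-1};j_{n-1}) ∋ r(u)`
updated according to the pairs `Z_ℓ Z_{ℓ+1}`. -/
def Condensed (u : List A) (r : List (RLetter A)) : Prop :=
  ∃ (p : ℕ) (i j : ℕ → ℕ),
    evalR u r = some p ∧
    i 0 = 0 ∧ j 0 = u.length + 1 ∧
    (∀ ℓ a b, 1 ≤ ℓ → r[ℓ-1]? = some (RLetter.X a) → r[ℓ]? = some (RLetter.X b) →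
        nextOcc u a (i (ℓ-1)) = some (i ℓ) ∧ j ℓ = j (ℓ-1)) ∧
    (∀ ℓ a b, 1 ≤ ℓ → r[ℓ-1]? = some (RLetter.Y a) → r[ℓ]? = some (RLetter.Y b) →
        i ℓ = i (ℓ-1) ∧ prevOcc u a (j (ℓ-1)) = some (j ℓ)) ∧
    (∀ ℓ a b, 1 ≤ ℓ → r[ℓ-1]? = some (RLetter.X a) → r[ℓ]? = some (RLetter.Y b) →
        i ℓ = i (ℓ-1) ∧ nextOcc u a (i (ℓ-1)) = some (j ℓ)) ∧
    (∀ ℓ a b, 1 ≤ ℓ → r[ℓ-1]? = some (RLetter.Y a) → r[ℓ]? = some (RLetter.X b) →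
        prevOcc u a (j (ℓ-1)) = some (i ℓ) ∧ j ℓ = j (ℓ-1)) ∧
    (∀ ℓ, 1 ≤ ℓ → ℓ < r.length →
        i (ℓ-1) ≤ i ℓ ∧ j ℓ ≤ j (ℓ-1) ∧ (i (ℓ-1) < i ℓ ∨ j ℓ < j (ℓ-1))) ∧
    i (r.length - 1) < p ∧ p < j (r.length - 1)

/-- `u` and `v` agree on rankers from the set `R`. -/
def AgreeDef (R : List (RLetter A) → Prop) (u v : List A) : Prop :=
  ∀ r, R r → (Defined u r ↔ Defined v r)

/-- `u` and `v` agree on condensed rankers from the set `R`. -/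
def AgreeCond (R : List (RLetter A) → Prop) (u v : List A) : Prop :=
  ∀ r, R r → (Condensed u r ↔ Condensed v r)

/-- `u ⊳_{m,n} v`. -/
def trir (m n : ℕ) (u v : List A) : Prop := AgreeCond (uRX m n) u v

/-- `u ⊲_{m,n} v`. -/
def tril (m n : ℕ) (u v : List A) : Prop := AgreeCond (uRY m n) u v

/-- The alphabet (set of letters) of a word. -/
def alph (u : List A) : Finset A := u.toFinset

/-- Condition (WI 1). -/
def WI1 (m n : ℕ) (u v : List A) : Prop := AgreeDef (uR m n) u v

/-- Condition (WI 2). -/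
def WI2 (m n : ℕ) (u v : List A) : Prop :=
  ∀ r r', uR m n r → uR (m-1) (n-1) r' →
    Defined u r → Defined v r → Defined u r' → Defined v r' →
    compare (pos u r) (pos u r') = compare (pos v r) (pos v r')

/-- Condition (WI 3). -/
def WI3 (m n : ℕ) (u v : List A) : Prop :=
  ∀ r r', uR m n r → uR m (n-1) r' →
    ((endsX r ∧ endsY r') ∨ (endsY r ∧ endsX r')) →
    Defined u r → Defined v r → Defined u r' → Defined v r' →
    compare (pos u r) (pos u r') = compare (pos v r) (pos v r')

/-- Condition (WI 1c). -/
def WI1c (m n : ℕ) (u v : List A) : Prop := AgreeCond (uR m n) u v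

/-- Condition (WI 2c). -/
def WI2c (m n : ℕ) (u v : List A) : Prop :=
  ∀ r r', uR m n r → uR (m-1) (n-1) r' →
    Condensed u r → Condensed v r → Condensed u r' → Condensed v r' →
    compare (pos u r) (pos u r') = compare (pos v r) (pos v r')

/-- Condition (WI 3c). -/
def WI3c (m n : ℕ) (u v : List A) : Prop :=
  ∀ r r', uR m n r → uR m (n-1) r' →
    ((endsX r ∧ endsY r') ∨ (endsY r ∧ endsX r')) →
    Condensed u r → Condensed v r → Condensed u r' → Condensed v r' →
    compare (pos u r) (pos u r') = compare (pos v r) (pos v r')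


/-- The three-letter alphabet `{a, b, c}`. -/
inductive ABC : Type where
  | a | b | c
  deriving DecidableEq

instance : Fintype ABC where
  elems := {ABC.a, ABC.b, ABC.c}
  complete := fun x => by cases x <;> simp

/-- `w^k`. -/
def wpow (w : List ABC) (k : ℕ) : List ABC := (List.replicate k w).flatten

/-- `u_n = (bc)^n (a (bc)^n)^n`. -/
def un (k : ℕ) : List ABC :=
  wpow [ABC.b, ABC.c] k ++ wpow (ABC.a :: wpow [ABC.b, ABC.c] k) k

/-- `v_n = (bc)^n b (a (bc)^n)^n`. -/
def vn (k : ℕ) : List ABC :=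
  wpow [ABC.b, ABC.c] k ++ ABC.b :: wpow (ABC.a :: wpow [ABC.b, ABC.c] k) k

/-!
Write `u_n = w s` and `v_n = w b s` with `w = (bc)^n` and `s = (a (bc)^n)^n`, and match the
positions of `w` with themselves and the positions of `s` in `u_n` with their shifts by one in
`v_n`. A first block of `X`-letters evaluates to matching positions: a letter `b` or `c` moves by
at most two, so a block of at most `n` letters read inside `w` stays there until it reads an `a`,
and then it enters `s` at the same place in both words. A `Y`-block can lose the matching only by
returning from `s` into `w` or `w b`; from the right end of these words it moves at most two
positions per letter, so it neither runs out of letters to the left nor becomes undefined, unless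
it reads an `a`, which fails in both words. From anywhere in that prefix a final `X`-block of at
most `n` letters can be read, since every word of length at most `n` is a scattered subword of
`s`.

The inserted `b` is visible to condensedness and to a fourth block because it exchanges the last
two letters in front of the first `a`: these are `bc` in `u_n` and `cb` in `v_n`.
-/

section OptionRel

variable {α β γ δ : Type*}

theorem optionRel_map_map {R : β → γ → Prop} {o : Option α} {f : α → β} {g : α → γ}
    (h : ∀ x ∈ o, R (f x) (g x)) : Option.Rel R (o.map f) (o.map g) := by
  cases o with
  | none => exact .none
  | some x => exact .some (h x rfl)

theorem optionRel_self {R : α → α → Prop} {o : Option α} (h : ∀ x ∈ o, R x x) :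
    Option.Rel R o o := by
  simpa using optionRel_map_map (f := id) (g := id) h

theorem optionRel_mono {R S : α → β → Prop} {o : Option α} {o' : Option β}
    (h : Option.Rel R o o') (hRS : ∀ x y, R x y → S x y) : Option.Rel S o o' := by
  cases h with
  | none => exact .none
  | some h => exact .some (hRS _ _ h)

theorem optionRel_bind {R : α → β → Prop} {S : γ → δ → Prop} {o : Option α}
    {o' : Option β} {f : α → Option γ} {g : β → Option δ} (h : Option.Rel R o o')
    (hfg : ∀ x y, R x y → Option.Rel S (f x) (g y)) : Option.Rel S (o.bind f) (o'.bind g) := by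
  cases h with
  | none => exact .none
  | some h => exact hfg _ _ h

theorem isSome_bind_iff_of_optionRel {R : α → β → Prop} {o : Option α}
    {o' : Option β} {f : α → Option γ} {g : β → Option δ} (h : Option.Rel R o o')
    (hfg : ∀ x y, R x y → ((f x).isSome ↔ (g y).isSome)) :
    (o.bind f).isSome ↔ (o'.bind g).isSome := by
  cases h with
  | none => exact Iff.rfl
  | some h => exact hfg _ _ h

end OptionRel

section Positions

variable {α : Type*}

theorem head?_eq_some_iff_isLeast [PartialOrder α] {l : List α} (hl : l.Pairwise (· < ·)) {x : α} :
    l.head? = some x ↔ IsLeast {y | y ∈ l} x := by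
  cases l with
  | nil => simp [IsLeast]
  | cons y l =>
    have hy : IsLeast {z | z ∈ y :: l} y :=
      ⟨by simp, fun z hz => by
        rcases List.mem_cons.1 hz with rfl | hz
        · rfl
        · exact (List.rel_of_pairwise_cons hl hz).le⟩
    rw [List.head?_cons, Option.some_inj]
    exact ⟨fun h => h ▸ hy, hy.unique⟩

theorem getLast?_eq_some_iff_isGreatest [PartialOrder α] {l : List α} (hl : l.Pairwise (· < ·))
    {x : α} : l.getLast? = some x ↔ IsGreatest {y | y ∈ l} x := by
  have hset : {y | y ∈ l} = {y | y ∈ l.reverse} := Set.ext fun _ => List.mem_reverse.symm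
  rw [← List.head?_reverse, hset]
  exact head?_eq_some_iff_isLeast (α := αᵒᵈ) (List.pairwise_reverse.2 hl)

/-- The set of `a`-positions of `u`, 1-indexed as in the paper. -/
def occ (u : List α) (a : α) : Set ℕ := {i | 1 ≤ i ∧ u[i - 1]? = some a}

theorem le_length_of_mem_occ {u : List α} {a : α} {i : ℕ} (h : i ∈ occ u a) : i ≤ u.length := by
  have := (List.getElem?_eq_some_iff.1 h.2).1
  omega

theorem mem_of_mem_occ {u : List α} {a : α} {i : ℕ} (h : i ∈ occ u a) : a ∈ u :=
  List.mem_of_getElem? h.2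

theorem exists_mem_occ {u : List α} {a : α} (h : a ∈ u) : ∃ i, i ∈ occ u a := by
  obtain ⟨i, hi⟩ := List.mem_iff_getElem?.1 h
  exact ⟨i + 1, by simpa [occ] using hi⟩

theorem mem_occ_append {w s : List α} {a : α} {i : ℕ} :
    i ∈ occ (w ++ s) a ↔ i ∈ occ w a ∨ ∃ k ∈ occ s a, w.length + k = i := by
  constructor
  · rintro ⟨hi, h⟩
    rcases lt_or_ge (i - 1) w.length with hlt | hge
    · exact Or.inl ⟨hi, by rwa [List.getElem?_append_left hlt] at h⟩
    · rw [List.getElem?_append_right hge] at h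
      refine Or.inr ⟨i - w.length, ⟨by omega, ?_⟩, by omega⟩
      rwa [Nat.sub_right_comm]
  · rintro (h | ⟨k, ⟨hk, h⟩, rfl⟩)
    · have := le_length_of_mem_occ h
      exact ⟨h.1, by rw [List.getElem?_append_left (by have := h.1; omega)]; exact h.2⟩
    · refine ⟨by omega, ?_⟩
      rwa [Nat.add_sub_assoc hk, List.getElem?_append_right (by omega), Nat.add_sub_cancel_left]

theorem one_mem_occ_cons (u : List α) (a : α) : 1 ∈ occ (a :: u) a := by
  simp [occ]

end Positions

section NextPrev

variable {u w s : List A} {a : A} {p q i : ℕ}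

theorem nextOcc_eq_some_iff : nextOcc u a q = some p ↔ IsLeast (occ u a ∩ Set.Ioi q) p := by
  rw [nextOcc, head?_eq_some_iff_isLeast (List.pairwise_lt_range.filter _)]
  refine iff_of_eq (congrArg (IsLeast · p) (Set.ext fun i => ?_))
  simp only [List.mem_filter, List.mem_range, decide_eq_true_eq, Set.mem_ofPred_eq]
  exact ⟨fun h => ⟨⟨by omega, h.2.2⟩, h.2.1⟩,
    fun h => ⟨by have := le_length_of_mem_occ h.1; omega, h.2, h.1.2⟩⟩

theorem prevOcc_eq_some_iff : prevOcc u a q = some p ↔ IsGreatest (occ u a ∩ Set.Iio q) p := by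
  rw [prevOcc, getLast?_eq_some_iff_isGreatest (List.pairwise_lt_range.filter _)]
  refine iff_of_eq (congrArg (IsGreatest · p) (Set.ext fun i => ?_))
  simp only [List.mem_filter, List.mem_range, decide_eq_true_eq, Set.mem_ofPred_eq]
  exact ⟨fun h => ⟨⟨h.2.1, h.2.2.2⟩, h.2.2.1⟩,
    fun h => ⟨by have := le_length_of_mem_occ h.1; omega, h.1.1, h.2, h.1.2⟩⟩

theorem lt_of_nextOcc_eq_some (h : nextOcc u a q = some p) : q < p :=
  (nextOcc_eq_some_iff.1 h).1.2

theorem le_length_of_nextOcc_eq_some (h : nextOcc u a q = some p) : p ≤ u.length :=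
  le_length_of_mem_occ (nextOcc_eq_some_iff.1 h).1.1

theorem pos_of_prevOcc_eq_some (h : prevOcc u a q = some p) : 0 < p :=
  (prevOcc_eq_some_iff.1 h).1.1.1

theorem le_length_of_prevOcc_eq_some (h : prevOcc u a q = some p) : p ≤ u.length :=
  le_length_of_mem_occ (prevOcc_eq_some_iff.1 h).1.1

theorem exists_nextOcc_le (hi : i ∈ occ u a) (hq : q < i) : ∃ p ≤ i, nextOcc u a q = some p := by
  have hne : (occ u a ∩ Set.Ioi q).Nonempty := ⟨i, hi, hq⟩
  exact ⟨sInf (occ u a ∩ Set.Ioi q), Nat.sInf_le ⟨hi, hq⟩,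
    nextOcc_eq_some_iff.2 ⟨Nat.sInf_mem hne, fun _ hj => Nat.sInf_le hj⟩⟩

theorem exists_le_prevOcc (hi : i ∈ occ u a) (hq : i < q) : ∃ p ≥ i, prevOcc u a q = some p := by
  obtain ⟨p, hp⟩ := BddAbove.exists_isGreatest_of_nonempty (S := occ u a ∩ Set.Iio q)
    ⟨q, fun _ hj => hj.2.le⟩ ⟨i, hi, hq⟩
  exact ⟨p, hp.2 ⟨hi, hq⟩, prevOcc_eq_some_iff.2 hp⟩

theorem nextOcc_eq_none_iff : nextOcc u a q = none ↔ ∀ i ∈ occ u a, i ≤ q := by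
  refine ⟨fun h i hi => not_lt.1 fun hq => ?_, fun h => Option.eq_none_iff_forall_ne_some.2 ?_⟩
  · obtain ⟨p, -, hp⟩ := exists_nextOcc_le hi hq
    simp [h] at hp
  · intro p hp
    obtain ⟨hp, hq⟩ := (nextOcc_eq_some_iff.1 hp).1
    exact (h p hp).not_gt hq

theorem prevOcc_eq_none_iff : prevOcc u a q = none ↔ ∀ i ∈ occ u a, q ≤ i := by
  refine ⟨fun h i hi => not_lt.1 fun hq => ?_, fun h => Option.eq_none_iff_forall_ne_some.2 ?_⟩
  · obtain ⟨p, -, hp⟩ := exists_le_prevOcc hi hq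
    simp [h] at hp
  · intro p hp
    obtain ⟨hp, hq⟩ := (prevOcc_eq_some_iff.1 hp).1
    exact (h p hp).not_gt hq

theorem nextOcc_eq_none_of_notMem (ha : a ∉ u) (q : ℕ) : nextOcc u a q = none :=
  nextOcc_eq_none_iff.2 fun _ hi => absurd (mem_of_mem_occ hi) ha

theorem prevOcc_eq_none_of_notMem (ha : a ∉ u) (q : ℕ) : prevOcc u a q = none :=
  prevOcc_eq_none_iff.2 fun _ hi => absurd (mem_of_mem_occ hi) ha

theorem nextOcc_append (w s : List A) (a : A) (q : ℕ) :
    nextOcc (w ++ s) a q =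
      (nextOcc w a q).or ((nextOcc s a (q - w.length)).map (w.length + ·)) := by
  cases hw : nextOcc w a q with
  | some p =>
    obtain ⟨⟨hp, hq⟩, hmin⟩ := nextOcc_eq_some_iff.1 hw
    rw [Option.some_or, nextOcc_eq_some_iff]
    refine ⟨⟨mem_occ_append.2 (Or.inl hp), hq⟩, fun i ⟨hi, hqi⟩ => ?_⟩
    rcases mem_occ_append.1 hi with hi | ⟨k, -, rfl⟩
    · exact hmin ⟨hi, hqi⟩
    · have := le_length_of_mem_occ hp
      omega
  | none =>
    rw [nextOcc_eq_none_iff] at hw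
    cases hs : nextOcc s a (q - w.length) with
    | none =>
      rw [nextOcc_eq_none_iff] at hs
      simp only [Option.map_none, Option.none_or, nextOcc_eq_none_iff]
      intro i hi
      rcases mem_occ_append.1 hi with hi | ⟨k, hk, rfl⟩
      · exact hw i hi
      · have := hs k hk
        have := hk.1
        omega
    | some p =>
      obtain ⟨⟨hp, hq⟩, hmin⟩ := nextOcc_eq_some_iff.1 hs
      simp only [Option.map_some, Option.none_or, nextOcc_eq_some_iff]
      refine ⟨⟨mem_occ_append.2 (Or.inr ⟨p, hp, rfl⟩), ?_⟩, fun i ⟨hi, hqi⟩ => ?_⟩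
      · simp only [Set.mem_Ioi] at hq ⊢
        omega
      · simp only [Set.mem_Ioi] at hqi
        rcases mem_occ_append.1 hi with hi | ⟨k, hk, rfl⟩
        · exact absurd (hw i hi) (by omega)
        · have := hk.1
          exact Nat.add_le_add_left (hmin ⟨hk, Set.mem_Ioi.2 (by omega)⟩) _

theorem prevOcc_append (w s : List A) (a : A) (q : ℕ) :
    prevOcc (w ++ s) a q =
      ((prevOcc s a (q - w.length)).map (w.length + ·)).or (prevOcc w a q) := by
  cases hs : prevOcc s a (q - w.length) with
  | some p =>
    obtain ⟨⟨hp, hq⟩, hmax⟩ := prevOcc_eq_some_iff.1 hs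
    rw [Set.mem_Iio] at hq
    simp only [Option.map_some, Option.some_or, prevOcc_eq_some_iff]
    refine ⟨⟨mem_occ_append.2 (Or.inr ⟨p, hp, rfl⟩), Set.mem_Iio.2 (by omega)⟩,
      fun i ⟨hi, hqi⟩ => ?_⟩
    rw [Set.mem_Iio] at hqi
    rcases mem_occ_append.1 hi with hi | ⟨k, hk, rfl⟩
    · exact (le_length_of_mem_occ hi).trans (Nat.le_add_right _ _)
    · exact Nat.add_le_add_left (hmax ⟨hk, Set.mem_Iio.2 (by omega)⟩) _
  | none =>
    have hright : ∀ k ∈ occ s a, q ≤ w.length + k := fun k hk => by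
      have := prevOcc_eq_none_iff.1 hs k hk
      omega
    rw [Option.map_none, Option.none_or]
    cases hw : prevOcc w a q with
    | none =>
      rw [prevOcc_eq_none_iff] at hw ⊢
      intro i hi
      rcases mem_occ_append.1 hi with hi | ⟨k, hk, rfl⟩
      exacts [hw i hi, hright k hk]
    | some p =>
      obtain ⟨⟨hp, hq⟩, hmax⟩ := prevOcc_eq_some_iff.1 hw
      refine prevOcc_eq_some_iff.2 ⟨⟨mem_occ_append.2 (Or.inl hp), hq⟩, fun i ⟨hi, hqi⟩ => ?_⟩
      rcases mem_occ_append.1 hi with hi | ⟨k, hk, rfl⟩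
      · exact hmax ⟨hi, hqi⟩
      · exact absurd (hright k hk) (not_le.2 hqi)

theorem nextOcc_append_add (w s : List A) (a : A) (k : ℕ) :
    nextOcc (w ++ s) a (w.length + k) = (nextOcc s a k).map (w.length + ·) := by
  have hw : nextOcc w a (w.length + k) = none :=
    nextOcc_eq_none_iff.2 fun _ hi => (le_length_of_mem_occ hi).trans (Nat.le_add_right _ _)
  rw [nextOcc_append, hw, Option.none_or, Nat.add_sub_cancel_left]

theorem prevOcc_append_of_le (s : List A) (hq : q ≤ w.length + 1) :
    prevOcc (w ++ s) a q = prevOcc w a q := by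
  have hs : prevOcc s a (q - w.length) = none :=
    prevOcc_eq_none_iff.2 fun i hi => by have := hi.1; omega
  rw [prevOcc_append, hs, Option.map_none, Option.none_or]

theorem nextOcc_append_append_cons {m : List A} (ha : a ∉ m) (w s : List A) :
    nextOcc (w ++ (m ++ a :: s)) a w.length = some (w.length + m.length + 1) := by
  have hone : nextOcc (a :: s) a 0 = some 1 :=
    nextOcc_eq_some_iff.2 ⟨⟨one_mem_occ_cons s a, Nat.one_pos⟩, fun _ hi => hi.1.1⟩
  have h := nextOcc_append_add w (m ++ a :: s) a 0
  rw [Nat.add_zero, nextOcc_append m, nextOcc_eq_none_of_notMem ha, Nat.zero_sub, hone] at h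
  simpa [Nat.add_assoc] using h

theorem prevOcc_append_cons_append {m : List A} (ha : a ∉ m) (w s : List A) :
    prevOcc (w ++ a :: (m ++ s)) a (w.length + m.length + 2) = some (w.length + 1) := by
  have hone : prevOcc (a :: m) a (m.length + 2) = some 1 := by
    refine prevOcc_eq_some_iff.2
      ⟨⟨one_mem_occ_cons m a, Set.mem_Iio.2 (by omega)⟩, fun i ⟨hi, _⟩ => ?_⟩
    rcases mem_occ_append (w := [a]).1 hi with hi | ⟨k, hk, -⟩
    exacts [le_length_of_mem_occ hi, absurd (mem_of_mem_occ hk) ha]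
  have h : prevOcc (w ++ (a :: m)) a (w.length + m.length + 2) = some (w.length + 1) := by
    rw [prevOcc_append, show w.length + m.length + 2 - w.length = m.length + 2 by omega, hone,
      Option.map_some, Option.some_or]
  rw [← List.cons_append, ← List.append_assoc, prevOcc_append_of_le _ (by simp), h]

end NextPrev

section Evaluation

variable {u v : List A}

theorem evalFrom_append (u : List A) (r t : List (RLetter A)) (q : ℕ) :
    evalFrom u (r ++ t) q = (evalFrom u r q).bind (evalFrom u t) := by
  induction r generalizing q with
  | nil => rfl
  | cons z r ih =>
    simp only [List.cons_append, evalFrom, Option.bind_assoc, ih]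

theorem evalR_of_startsX {r : List (RLetter A)} (hr : startsX r) (u : List A) :
    evalR u r = evalFrom u r 0 := by
  obtain ⟨a, t, rfl⟩ := hr
  rfl

theorem evalR_of_startsY {r : List (RLetter A)} (hr : startsY r) (u : List A) :
    evalR u r = evalFrom u r (u.length + 1) := by
  obtain ⟨a, t, rfl⟩ := hr
  rfl

/-- The index of `Φ` counts the letters still to be read. -/
theorem rel_evalFrom_of_step {Φ : ℕ → ℕ → ℕ → Prop} {r : List (RLetter A)}
    (hstep : ∀ z ∈ r, ∀ j < r.length, ∀ p p', Φ (j + 1) p p' →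
      Option.Rel (Φ j) (stepR u z p) (stepR v z p'))
    {p p' : ℕ} (h : Φ r.length p p') :
    Option.Rel (Φ 0) (evalFrom u r p) (evalFrom v r p') := by
  induction r generalizing p p' with
  | nil => exact .some h
  | cons z r ih =>
    have hz := hstep z List.mem_cons_self r.length (Nat.lt_succ_self _) p p' h
    exact optionRel_bind hz fun q q' hq => ih (fun y hy j hj =>
      hstep y (List.mem_cons_of_mem z hy) j (hj.trans (Nat.lt_succ_self _))) hq

theorem evalFrom_map_X_append_add (w s x : List A) (k : ℕ) :
    evalFrom (w ++ s) (x.map .X) (w.length + k) =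
      (evalFrom s (x.map .X) k).map (w.length + ·) := by
  induction x generalizing k with
  | nil => rfl
  | cons a x ih =>
    simp only [List.map_cons, evalFrom, stepR, nextOcc_append_add]
    cases nextOcc s a k with
    | none => rfl
    | some q => exact ih q

theorem isSome_evalFrom_map_X {x : List A} {q : ℕ} (h : x.Sublist (u.drop q)) :
    (evalFrom u (x.map .X) q).isSome := by
  induction x generalizing q with
  | nil => rfl
  | cons a x ih =>
    obtain ⟨l₁, l₂, hl, ha, hx⟩ := List.cons_sublist_iff.1 h
    obtain ⟨i, hi⟩ := exists_mem_occ ha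
    have hiq : q + i ∈ occ u a := by
      have hq : q ≤ u.length := by
        by_contra! hq
        simp [List.drop_of_length_le hq.le] at h
      rw [← List.take_append_drop q u, hl, mem_occ_append]
      exact Or.inr ⟨i, mem_occ_append.2 (Or.inl hi), by rw [List.length_take_of_le hq]⟩
    obtain ⟨p, hp, hpu⟩ := exists_nextOcc_le hiq (Nat.lt_add_of_pos_right hi.1)
    have hdrop : l₂ = u.drop (q + l₁.length) := by
      rw [← List.drop_drop, hl, List.drop_left]
    have hple : p ≤ q + l₁.length :=
      hp.trans (Nat.add_le_add_left (le_length_of_mem_occ hi) q)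
    have hxp : x.Sublist (u.drop p) :=
      (hdrop ▸ hx).trans (List.drop_sublist_drop_left u hple)
    simpa [evalFrom, stepR, hpu] using ih hxp

end Evaluation

section Blocks

variable {α : Type*}

theorem numBlocks_cons_pos (z : RLetter α) (r : List (RLetter α)) : 0 < numBlocks (z :: r) := by
  induction r generalizing z with
  | nil => exact Nat.one_pos
  | cons w r ih => exact (ih w).trans_le (Nat.le_add_left _ _)

theorem numBlocks_eq_zero_iff {r : List (RLetter α)} : numBlocks r = 0 ↔ r = [] := by
  cases r with
  | nil => simp [numBlocks]
  | cons z r => simpa using (numBlocks_cons_pos z r).ne'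

theorem exists_eq_map_X_append : ∀ {r : List (RLetter α)}, ¬ startsY r →
    ∃ (x : List α) (t : List (RLetter α)),
      r = x.map .X ++ t ∧ ¬ startsX t ∧ numBlocks t = numBlocks r - 1
  | [], _ => ⟨[], [], rfl, by simp [startsX], rfl⟩
  | .Y a :: r, h => absurd ⟨a, r, rfl⟩ h
  | [.X a], _ => ⟨[a], [], rfl, by simp [startsX], rfl⟩
  | .X a :: .Y b :: r, _ =>
    ⟨[a], .Y b :: r, rfl, by simp [startsX], by simp [numBlocks, sameDir]⟩
  | .X a :: .X b :: r, _ => by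
    obtain ⟨x, t, hr, ht, hn⟩ := exists_eq_map_X_append (r := .X b :: r) (by simp [startsY])
    exact ⟨a :: x, t, by rw [hr]; rfl, ht, by simpa [numBlocks, sameDir] using hn⟩

theorem exists_eq_map_Y_append : ∀ {r : List (RLetter α)}, ¬ startsX r →
    ∃ (y : List α) (t : List (RLetter α)),
      r = y.map .Y ++ t ∧ ¬ startsY t ∧ numBlocks t = numBlocks r - 1
  | [], _ => ⟨[], [], rfl, by simp [startsY], rfl⟩
  | .X a :: r, h => absurd ⟨a, r, rfl⟩ h
  | [.Y a], _ => ⟨[a], [], rfl, by simp [startsY], rfl⟩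
  | .Y a :: .X b :: r, _ =>
    ⟨[a], .X b :: r, rfl, by simp [startsY], by simp [numBlocks, sameDir]⟩
  | .Y a :: .Y b :: r, _ => by
    obtain ⟨y, t, hr, ht, hn⟩ := exists_eq_map_Y_append (r := .Y b :: r) (by simp [startsX])
    exact ⟨a :: y, t, by rw [hr]; rfl, ht, by simpa [numBlocks, sameDir] using hn⟩

theorem exists_eq_map_Y_append_map_X {r : List (RLetter α)} (hr : ¬ startsX r)
    (hn : numBlocks r ≤ 2) : ∃ y x : List α, r = y.map .Y ++ x.map .X := by
  obtain ⟨y, t, rfl, ht, hnt⟩ := exists_eq_map_Y_append hr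
  obtain ⟨x, t', rfl, -, hnt'⟩ := exists_eq_map_X_append ht
  obtain rfl := numBlocks_eq_zero_iff.1 (show numBlocks t' = 0 by omega)
  exact ⟨y, x, by rw [List.append_nil]⟩

theorem exists_eq_map_X_append_map_Y_append_map_X {r : List (RLetter α)} (hr : ¬ startsY r)
    (hn : numBlocks r ≤ 3) : ∃ x y z : List α, r = x.map .X ++ (y.map .Y ++ z.map .X) := by
  obtain ⟨x, t, rfl, ht, hnt⟩ := exists_eq_map_X_append hr
  obtain ⟨y, z, rfl⟩ := exists_eq_map_Y_append_map_X ht (by omega)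
  exact ⟨x, y, z, rfl⟩

end Blocks

section Agreement

variable {p p' d l m n j : ℕ} {w e s : List A} {z : A}

/-- Every letter of `w` occurs in each window of `d` consecutive positions of `w`. -/
def GapBounded {α : Type*} (d : ℕ) (w : List α) : Prop :=
  ∀ z ∈ w, ∀ i, i + d ≤ w.length → ∃ k ∈ occ w z, i < k ∧ k ≤ i + d

/-- Positions `p` of `w ++ s` and `q` of `w ++ e ++ s` (with `l = |w|` and `m = |e|`) that
correspond to each other when the factor `e` is skipped. -/
def Aligned (l m p q : ℕ) : Prop := (p ≤ l ∧ q = p) ∨ (l < p ∧ q = p + m)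

/-- The invariant of an `X`-block with `j` letters left: the positions are aligned and, if they are
still inside `w`, there are `d` positions of `w` ahead for each of these letters. -/
def AlignedFwd (d l m j p q : ℕ) : Prop := Aligned l m p q ∧ (p ≤ l → p + d * j ≤ l)

/-- The positions `p` of `w` and `q` of `w ++ e` may be unrelated, but `j` further letters, each
moving at most `d` positions to the left, cannot leave the word. -/
def InPrefix (d l m j p q : ℕ) : Prop := (d * j < p ∧ p ≤ l) ∧ d * j < q ∧ q ≤ l + m

/-- The invariant of a `Y`-block with `j` letters left. -/
def AlignedBwd (d l m j p q : ℕ) : Prop := Aligned l m p q ∨ InPrefix d l m j p q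

theorem GapBounded.exists_mem_occ_left {α : Type*} {d i : ℕ} {w e : List α} {z : α}
    (h : GapBounded d (w ++ e)) (hz : z ∈ w ++ e) (hi : i + d ≤ w.length) :
    ∃ k ∈ occ w z, i < k ∧ k ≤ i + d := by
  obtain ⟨k, hk, hik, hkd⟩ := h z hz i (by rw [List.length_append]; omega)
  rcases mem_occ_append.1 hk with hk | ⟨k, ⟨hk, -⟩, rfl⟩
  · exact ⟨k, hk, hik, hkd⟩
  · omega

theorem rel_alignedFwd_map_nextOcc (s : List A) (z : A) (k : ℕ) :
    Option.Rel (AlignedFwd d l m j) ((nextOcc s z k).map (l + ·))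
      ((nextOcc s z k).map (l + m + ·)) :=
  optionRel_map_map fun q hq => by
    have := lt_of_nextOcc_eq_some hq
    exact ⟨Or.inr ⟨by omega, by omega⟩, fun h => by omega⟩

theorem AlignedFwd.rel_nextOcc (hwe : GapBounded d (w ++ e))
    (h : AlignedFwd d w.length e.length (j + 1) p p') :
    Option.Rel (AlignedFwd d w.length e.length j)
      (nextOcc (w ++ s) z p) (nextOcc (w ++ e ++ s) z p') := by
  obtain ⟨⟨hp, rfl⟩ | ⟨hp, rfl⟩, hroom⟩ := h
  · have hpl : p' + (d * j + d) ≤ w.length := hroom hp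
    by_cases hz : z ∈ w ++ e
    · obtain ⟨k, hk, hpk, hkd⟩ := hwe.exists_mem_occ_left hz (i := p') (by omega)
      obtain ⟨q, hqk, hq⟩ := exists_nextOcc_le hk hpk
      rw [List.append_assoc, nextOcc_append w s, nextOcc_append w (e ++ s), hq, Option.some_or,
        Option.some_or]
      exact .some ⟨Or.inl ⟨by omega, rfl⟩, fun _ => by omega⟩
    · have hzw : z ∉ w := fun h => hz (List.mem_append_left e h)
      rw [nextOcc_append w, nextOcc_append (w ++ e), nextOcc_eq_none_of_notMem hzw,
        nextOcc_eq_none_of_notMem hz, List.length_append, Nat.sub_eq_zero_of_le hp,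
        Nat.sub_eq_zero_of_le (hp.trans (Nat.le_add_right _ _))]
      exact rel_alignedFwd_map_nextOcc s z 0
  · obtain ⟨k, rfl⟩ := Nat.exists_eq_add_of_lt hp
    have hk : w.length + k + 1 + e.length = (w ++ e).length + (k + 1) := by
      rw [List.length_append]; omega
    rw [hk, Nat.add_assoc w.length, nextOcc_append_add, nextOcc_append_add, List.length_append]
    exact rel_alignedFwd_map_nextOcc s z (k + 1)

theorem rel_prevOcc_inPrefix (hwe : GapBounded d (w ++ e)) (hw : d * (j + 1) ≤ w.length)
    (hp : d * (j + 1) < p) (hp' : d * (j + 1) < p') :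
    Option.Rel (InPrefix d w.length e.length j) (prevOcc w z p) (prevOcc (w ++ e) z p') := by
  by_cases hz : z ∈ w ++ e
  · rw [Nat.mul_succ] at hw hp hp'
    obtain ⟨k, hk, hjk, hkd⟩ := hwe.exists_mem_occ_left hz hw
    obtain ⟨q, hkq, hq⟩ := exists_le_prevOcc hk (hkd.trans_lt hp)
    obtain ⟨q', hkq', hq'⟩ := exists_le_prevOcc (mem_occ_append.2 (Or.inl hk)) (hkd.trans_lt hp')
    rw [hq, hq']
    exact .some ⟨⟨hjk.trans_le hkq, le_length_of_prevOcc_eq_some hq⟩, hjk.trans_le hkq',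
      (le_length_of_prevOcc_eq_some hq').trans_eq List.length_append⟩
  · have hzw : z ∉ w := fun h => hz (List.mem_append_left e h)
    rw [prevOcc_eq_none_of_notMem hzw, prevOcc_eq_none_of_notMem hz]
    exact .none

theorem AlignedBwd.rel_prevOcc (hwe : GapBounded d (w ++ e)) (hw : d * (j + 1) ≤ w.length)
    (h : AlignedBwd d w.length e.length (j + 1) p p') :
    Option.Rel (AlignedBwd d w.length e.length j)
      (prevOcc (w ++ s) z p) (prevOcc (w ++ e ++ s) z p') := by
  obtain (⟨hp, rfl⟩ | ⟨hp, rfl⟩) | ⟨⟨hlt, hp⟩, hlt', hp'⟩ := h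
  · have hp1 : p' ≤ w.length + 1 := hp.trans (Nat.le_succ _)
    rw [List.append_assoc, prevOcc_append_of_le s hp1, prevOcc_append_of_le (e ++ s) hp1]
    exact optionRel_self fun q hq => Or.inl (Or.inl ⟨le_length_of_prevOcc_eq_some hq, rfl⟩)
  · have hk : p + e.length - (w ++ e).length = p - w.length := by
      rw [List.length_append]; omega
    rw [prevOcc_append w, prevOcc_append (w ++ e), hk, List.length_append]
    cases hs : prevOcc s z (p - w.length) with
    | none =>
      exact optionRel_mono (rel_prevOcc_inPrefix hwe hw (hw.trans_lt hp)
        (hw.trans_lt (hp.trans_le (Nat.le_add_right _ _)))) fun _ _ => Or.inr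
    | some q =>
      have hq : 0 < q := pos_of_prevOcc_eq_some hs
      exact .some (Or.inl (Or.inr ⟨Nat.lt_add_of_pos_right hq, Nat.add_right_comm _ _ _⟩))
  · rw [prevOcc_append_of_le s (by omega),
      prevOcc_append_of_le s (by rw [List.length_append]; omega)]
    exact optionRel_mono (rel_prevOcc_inPrefix hwe hw hlt hlt') fun _ _ => Or.inr

theorem rel_evalFrom_map_X (hwe : GapBounded d (w ++ e)) {x : List A}
    (hx : d * x.length ≤ w.length) :
    Option.Rel (Aligned w.length e.length)
      (evalFrom (w ++ s) (x.map .X) 0) (evalFrom (w ++ e ++ s) (x.map .X) 0) := by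
  refine optionRel_mono (rel_evalFrom_of_step (Φ := AlignedFwd d w.length e.length)
    (fun Z hZ j _ p p' h => ?_) ⟨Or.inl ⟨Nat.zero_le _, rfl⟩, fun _ => ?_⟩) fun _ _ h => h.1
  · obtain ⟨z, -, rfl⟩ := List.mem_map.1 hZ
    exact h.rel_nextOcc hwe
  · rwa [List.length_map, Nat.zero_add]

theorem rel_evalFrom_map_Y (hwe : GapBounded d (w ++ e)) {y : List A}
    (hy : d * y.length ≤ w.length) (h : Aligned w.length e.length p p') :
    Option.Rel (AlignedBwd d w.length e.length 0)
      (evalFrom (w ++ s) (y.map .Y) p) (evalFrom (w ++ e ++ s) (y.map .Y) p') := by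
  refine rel_evalFrom_of_step (fun Z hZ j hj p p' h => ?_) (Or.inl h)
  obtain ⟨z, -, rfl⟩ := List.mem_map.1 hZ
  rw [List.length_map] at hj
  exact h.rel_prevOcc hwe ((Nat.mul_le_mul_left d hj).trans hy)

theorem isSome_evalFrom_map_X_append {x : List A} (hx : x.Sublist s) (hp : p ≤ w.length) :
    (evalFrom (w ++ s) (x.map .X) p).isSome :=
  isSome_evalFrom_map_X <| by
    rw [List.drop_append_of_le_length hp]
    exact hx.trans (List.sublist_append_right _ _)

theorem AlignedBwd.isSome_evalFrom_map_X_iff {x : List A} (hx : x.Sublist s)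
    (h : AlignedBwd d w.length e.length j p p') :
    (evalFrom (w ++ s) (x.map .X) p).isSome ↔ (evalFrom (w ++ e ++ s) (x.map .X) p').isSome := by
  have hprefix (hp : p ≤ w.length) (hp' : p' ≤ (w ++ e).length) :
      (evalFrom (w ++ s) (x.map .X) p).isSome ↔ (evalFrom (w ++ e ++ s) (x.map .X) p').isSome :=
    iff_of_true (isSome_evalFrom_map_X_append hx hp) (isSome_evalFrom_map_X_append hx hp')
  rw [List.length_append] at hprefix
  obtain (⟨hp, rfl⟩ | ⟨hp, rfl⟩) | ⟨⟨-, hp⟩, -, hp'⟩ := h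
  · exact hprefix hp (by omega)
  · obtain ⟨k, rfl⟩ := Nat.exists_eq_add_of_lt hp
    have hk : w.length + k + 1 + e.length = (w ++ e).length + (k + 1) := by
      rw [List.length_append]; omega
    rw [hk, Nat.add_assoc w.length, evalFrom_map_X_append_add, evalFrom_map_X_append_add,
      Option.isSome_map, Option.isSome_map]
  · exact hprefix hp hp'

theorem isSome_evalFrom_map_Y_append_map_X_iff (hwe : GapBounded d (w ++ e)) {x y : List A}
    (hy : d * y.length ≤ w.length) (hx : x.Sublist s) (h : Aligned w.length e.length p p') :
    (evalFrom (w ++ s) (y.map .Y ++ x.map .X) p).isSome ↔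
      (evalFrom (w ++ e ++ s) (y.map .Y ++ x.map .X) p').isSome := by
  rw [evalFrom_append, evalFrom_append]
  exact isSome_bind_iff_of_optionRel (rel_evalFrom_map_Y hwe hy h) fun _ _ h =>
    h.isSome_evalFrom_map_X_iff hx

theorem agreeDef_uRX_three_of_gapBounded (hwe : GapBounded d (w ++ e)) (hw : d * n ≤ w.length)
    (hs : ∀ x : List A, x.length ≤ n → x.Sublist s) :
    AgreeDef (uRX 3 n) (w ++ s) (w ++ e ++ s) := by
  have hroom {x : List A} (hx : x.length ≤ n) : d * x.length ≤ w.length :=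
    (Nat.mul_le_mul_left d hx).trans hw
  rintro r (⟨_, _, hm, hn, rfl, rfl, hX⟩ | ⟨_, _, hm, hn, rfl, rfl, hY⟩)
  · have hnY : ¬ startsY r := by
      obtain ⟨a, t, rfl⟩ := hX
      simp [startsY]
    rw [Defined, Defined, evalR_of_startsX hX, evalR_of_startsX hX]
    obtain ⟨x, y, z, rfl⟩ := exists_eq_map_X_append_map_Y_append_map_X hnY hm
    simp only [List.length_append, List.length_map] at hn
    rw [evalFrom_append, evalFrom_append]
    exact isSome_bind_iff_of_optionRel (rel_evalFrom_map_X hwe (hroom (by omega))) fun _ _ h =>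
      isSome_evalFrom_map_Y_append_map_X_iff hwe (hroom (by omega)) (hs z (by omega)) h
  · have hnX : ¬ startsX r := by
      obtain ⟨a, t, rfl⟩ := hY
      simp [startsX]
    rw [Defined, Defined, evalR_of_startsY hY, evalR_of_startsY hY]
    obtain ⟨y, x, rfl⟩ := exists_eq_map_Y_append_map_X hnX (by omega)
    simp only [List.length_append, List.length_map] at hn
    refine isSome_evalFrom_map_Y_append_map_X_iff hwe (hroom (by omega)) (hs x (by omega)) ?_
    simp only [Aligned, List.length_append]
    omega

end Agreement

section Condensed

variable {u y t : List A} {a b c : A}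

theorem condensed_XYX_iff :
    Condensed u [.X a, .Y b, .X c] ↔ ∃ p q s, nextOcc u a 0 = some p ∧ prevOcc u b p = some q ∧
      nextOcc u c q = some s ∧ s < p := by
  constructor
  · rintro ⟨s, i, j, hs, hi0, -, -, -, hXY, hYX, -, -, hsj⟩
    obtain ⟨-, hp⟩ := hXY 1 a b le_rfl rfl rfl
    obtain ⟨hq, hj⟩ := hYX 2 b c one_le_two rfl rfl
    rw [Nat.sub_self, hi0] at hp
    simp only [Nat.add_one_sub_one] at hq hj
    have hsj : s < j 2 := hsj
    refine ⟨j 1, i 2, s, hp, hq, ?_, hj ▸ hsj⟩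
    simpa [evalR, evalFrom, startPos, stepR, hp, hq] using hs
  · rintro ⟨p, q, s, hp, hq, hs, hsp⟩
    have hpu : p < u.length + 1 :=
      Nat.lt_succ_of_le (le_length_of_nextOcc_eq_some hp)
    have hq0 : 0 < q := pos_of_prevOcc_eq_some hq
    have hqs : q < s := lt_of_nextOcc_eq_some hs
    refine ⟨s, fun ℓ => if ℓ ≤ 1 then 0 else q, fun ℓ => if ℓ = 0 then u.length + 1 else p,
      by simp [evalR, evalFrom, startPos, stepR, hp, hq, hs], rfl, rfl,
      ?_, ?_, ?_, ?_, ?_, hqs, hsp⟩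
    · rintro (_ | _ | _ | ℓ) <;> simp
    · rintro (_ | _ | _ | ℓ) <;> simp
    · rintro (_ | _ | _ | ℓ) <;> simp +contextual [← hp]
    · rintro (_ | _ | _ | ℓ) <;> simp +contextual [← hq]
    · rintro (_ | _ | _ | ℓ) <;> simp [hq0, hpu, hpu.le]

theorem nextOcc_zero_append_cons (ha : a ∉ y) :
    nextOcc (y ++ a :: t) a 0 = some (y.length + 1) := by
  simpa using nextOcc_append_append_cons ha [] t

theorem condensed_XYX_append (hab : a ≠ b) (hac : a ≠ c) (hbc : b ≠ c) (hay : a ∉ y) :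
    Condensed (y ++ b :: c :: a :: t) [.X a, .Y b, .X c] := by
  have ha : nextOcc (y ++ b :: c :: a :: t) a 0 = some (y.length + 3) := by
    simpa using nextOcc_zero_append_cons (y := y ++ [b, c]) (t := t) (by simp [hay, hab, hac])
  have hb : prevOcc (y ++ b :: c :: a :: t) b (y.length + 3) = some (y.length + 1) := by
    simpa using prevOcc_append_cons_append (m := [c]) (by simpa using hbc) y (a :: t)
  have hc : nextOcc (y ++ b :: c :: a :: t) c (y.length + 1) = some (y.length + 2) := by
    simpa using nextOcc_append_append_cons List.not_mem_nil (y ++ [b]) (a :: t)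
  exact condensed_XYX_iff.2 ⟨_, _, _, ha, hb, hc, Nat.lt_succ_self _⟩

theorem nextOcc_append_cons_cons (hab : a ≠ b) (hay : a ∉ y) :
    nextOcc (y ++ b :: a :: t) a 0 = some (y.length + 2) := by
  simpa using nextOcc_zero_append_cons (y := y ++ [b]) (t := t) (by simp [hay, hab])

theorem prevOcc_append_cons (b : A) (y t : List A) :
    prevOcc (y ++ b :: t) b (y.length + 2) = some (y.length + 1) :=
  prevOcc_append_cons_append List.not_mem_nil y t

theorem defined_XYX_append (hab : a ≠ b) (hay : a ∉ y) (hc : c ∈ t) :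
    Defined (y ++ b :: a :: t) [.X a, .Y b, .X c] := by
  obtain ⟨i, hi⟩ := exists_mem_occ hc
  have hi' : (y ++ [b, a]).length + i ∈ occ (y ++ b :: a :: t) c := by
    simpa using mem_occ_append (w := y ++ [b, a]).2 (Or.inr ⟨i, hi, rfl⟩)
  obtain ⟨p, -, hp⟩ := exists_nextOcc_le hi' (q := y.length + 1) (by simp; omega)
  simp [Defined, evalR, evalFrom, startPos, stepR, nextOcc_append_cons_cons hab hay,
    prevOcc_append_cons, hp]

theorem not_condensed_XYX_append (hab : a ≠ b) (hay : a ∉ y) :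
    ¬ Condensed (y ++ b :: a :: t) [.X a, .Y b, .X c] := by
  rw [condensed_XYX_iff]
  rintro ⟨p, q, s, hp, hq, hs, hsp⟩
  obtain rfl : y.length + 2 = p := by simpa [nextOcc_append_cons_cons hab hay] using hp
  obtain rfl : y.length + 1 = q := by simpa [prevOcc_append_cons] using hq
  have := lt_of_nextOcc_eq_some hs
  omega

theorem defined_XYXY_append (hab : a ≠ b) (hac : a ≠ c) (hay : a ∉ y) :
    Defined (y ++ c :: a :: b :: t) [.X a, .Y c, .X b, .Y a] := by
  have hb : nextOcc (y ++ c :: a :: b :: t) b (y.length + 1) = some (y.length + 3) := by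
    simpa using nextOcc_append_append_cons (m := [a]) (by simpa using hab.symm) (y ++ [c]) t
  have ha : prevOcc (y ++ c :: a :: b :: t) a (y.length + 3) = some (y.length + 2) := by
    simpa using prevOcc_append_cons a (y ++ [c]) (b :: t)
  simp [Defined, evalR, evalFrom, startPos, stepR, nextOcc_append_cons_cons hac hay,
    prevOcc_append_cons, hb, ha]

theorem not_defined_XYXY_append (hab : a ≠ b) (hac : a ≠ c) (hbc : b ≠ c) (hay : a ∉ y) :
    ¬ Defined (y ++ c :: b :: a :: t) [.X a, .Y c, .X b, .Y a] := by
  have ha : nextOcc (y ++ c :: b :: a :: t) a 0 = some (y.length + 3) := by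
    simpa using nextOcc_zero_append_cons (y := y ++ [c, b]) (t := t) (by simp [hay, hab, hac])
  have hc : prevOcc (y ++ c :: b :: a :: t) c (y.length + 3) = some (y.length + 1) := by
    simpa using prevOcc_append_cons_append (m := [b]) (by simpa using hbc.symm) y (a :: t)
  have hb : nextOcc (y ++ c :: b :: a :: t) b (y.length + 1) = some (y.length + 2) := by
    simpa using nextOcc_append_append_cons List.not_mem_nil (y ++ [c]) (a :: t)
  have hnone : prevOcc (y ++ c :: b :: a :: t) a (y.length + 2) = none := by
    rw [List.append_cons, prevOcc_append_of_le _ (by simp),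
      prevOcc_eq_none_of_notMem (by simp [hay, hac])]
  simp [Defined, evalR, evalFrom, startPos, stepR, ha, hc, hb, hnone]

end Condensed

section Words

theorem wpow_succ (w : List ABC) (k : ℕ) : wpow w (k + 1) = w ++ wpow w k := by
  simp [wpow, List.replicate_succ]

theorem wpow_succ' (w : List ABC) (k : ℕ) : wpow w (k + 1) = wpow w k ++ w := by
  simp [wpow, List.replicate_succ']

theorem mem_of_mem_wpow {w : List ABC} {k : ℕ} {z : ABC} (h : z ∈ wpow w k) : z ∈ w := by
  obtain ⟨l, hl, hz⟩ := List.mem_flatten.1 h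
  rwa [List.eq_of_mem_replicate hl] at hz

theorem length_wpow (w : List ABC) (k : ℕ) : (wpow w k).length = w.length * k := by
  simp [wpow, Nat.mul_comm]

theorem sublist_wpow {w x : List ABC} {k : ℕ} (hx : ∀ z ∈ x, z ∈ w) (hk : x.length ≤ k) :
    x.Sublist (wpow w k) := by
  induction k generalizing x with
  | zero => simp_all
  | succ k ih =>
    cases x with
    | nil => exact List.nil_sublist _
    | cons z x =>
      rw [wpow_succ]
      exact (List.singleton_sublist.2 (hx z List.mem_cons_self)).append
        (ih (fun y hy => hx y (List.mem_cons_of_mem z hy)) (Nat.le_of_succ_le_succ hk))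

theorem gapBounded_two {w : List ABC} (ha : ABC.a ∉ w) (hw : w.IsChain (· ≠ ·)) :
    GapBounded 2 w := by
  intro z hz i hi
  have hza : z ≠ .a := ne_of_mem_of_not_mem hz ha
  have hne : w[i] ≠ w[i + 1] := List.isChain_iff_getElem.1 hw i (by omega)
  have h₁ : w[i] ≠ .a := ne_of_mem_of_not_mem (List.getElem_mem _) ha
  have h₂ : w[i + 1] ≠ .a := ne_of_mem_of_not_mem (List.getElem_mem _) ha
  have hbc : ∀ x y z : ABC, x ≠ y → x ≠ .a → y ≠ .a → z ≠ .a → x = z ∨ y = z := by decide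
  rcases hbc _ _ z hne h₁ h₂ hza with h | h
  · exact ⟨i + 1, ⟨by omega, by simp [← h]⟩, by omega, by omega⟩
  · exact ⟨i + 2, ⟨by omega, by simp [← h]⟩, by omega, by omega⟩

theorem isChain_cons_wpow_bc_append (k : ℕ) :
    (ABC.c :: (wpow [.b, .c] k ++ [.b])).IsChain (· ≠ ·) := by
  induction k with
  | zero => simp [wpow]
  | succ k ih => simpa [wpow_succ] using ih

theorem a_notMem_wpow_bc (k : ℕ) : ABC.a ∉ wpow [.b, .c] k := fun h => by
  simpa using mem_of_mem_wpow h

theorem gapBounded_wpow_bc_append (k : ℕ) : GapBounded 2 (wpow [.b, .c] k ++ [.b]) :=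
  gapBounded_two (by simp [a_notMem_wpow_bc]) (isChain_cons_wpow_bc_append k).tail

theorem agreeDef_un_vn {k : ℕ} (hk : 1 ≤ k) : AgreeDef (uRX 3 k) (un k) (vn k) := by
  have hmem (z : ABC) : z ∈ ABC.a :: wpow [.b, .c] k := by
    obtain ⟨m, rfl⟩ := Nat.exists_eq_add_of_le' hk
    cases z <;> simp [wpow_succ]
  have h := agreeDef_uRX_three_of_gapBounded (gapBounded_wpow_bc_append k) (n := k)
    (length_wpow [.b, .c] k).ge fun x hx => sublist_wpow (fun z _ => hmem z) hx
  rwa [List.append_assoc] at h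

theorem exists_un_vn_eq {k : ℕ} (hk : 1 ≤ k) : ∃ y t, ABC.a ∉ y ∧
    un k = y ++ .b :: .c :: .a :: .b :: .c :: t ∧
    vn k = y ++ .b :: .c :: .b :: .a :: .b :: .c :: t := by
  obtain ⟨m, rfl⟩ := Nat.exists_eq_add_of_le' hk
  obtain ⟨t, htail⟩ : ∃ t, wpow (.a :: wpow [.b, .c] (m + 1)) (m + 1) = .a :: .b :: .c :: t := by
    rw [wpow_succ (.a :: _), wpow_succ [.b, .c]]
    exact ⟨_, rfl⟩
  refine ⟨wpow [.b, .c] m, t, a_notMem_wpow_bc m, ?_, ?_⟩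
  · rw [un, htail, wpow_succ', List.append_assoc]
    rfl
  · rw [vn, htail, wpow_succ', List.append_assoc]
    rfl

end Words

/-- Properties of `u_n` and `v_n` with respect to the rankers
`X_a Y_b X_c` and `X_a Y_c X_b Y_a`, and agreement on `uR^X_{3,n}`. -/
theorem statement19 (k : ℕ) (hk : 1 ≤ k) :
    (Condensed (un k) [RLetter.X ABC.a, RLetter.Y ABC.b, RLetter.X ABC.c] ∧
     Defined (vn k) [RLetter.X ABC.a, RLetter.Y ABC.b, RLetter.X ABC.c] ∧
     ¬ Condensed (vn k) [RLetter.X ABC.a, RLetter.Y ABC.b, RLetter.X ABC.c]) ∧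
    (∀ r, uRX 3 k r → (Defined (un k) r ↔ Defined (vn k) r)) ∧
    (Defined (un k) [RLetter.X ABC.a, RLetter.Y ABC.c, RLetter.X ABC.b, RLetter.Y ABC.a] ∧
     ¬ Defined (vn k) [RLetter.X ABC.a, RLetter.Y ABC.c, RLetter.X ABC.b, RLetter.Y ABC.a]) := by
  have hab : ABC.a ≠ .b := by decide
  have hac : ABC.a ≠ .c := by decide
  have hbc : ABC.b ≠ .c := by decide
  obtain ⟨y, t, hy, hu, hv⟩ := exists_un_vn_eq hk
  have hyb : ABC.a ∉ y ++ [.b] := by simp [hy]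
  have hybc : ABC.a ∉ y ++ [.b, .c] := by simp [hy]
  refine ⟨⟨?_, ?_, ?_⟩, agreeDef_un_vn hk, ?_, ?_⟩
  · exact hu ▸ condensed_XYX_append hab hac hbc hy
  · simpa [hv] using defined_XYX_append (c := .c) (t := .b :: .c :: t) hab hybc (by simp)
  · simpa [hv] using not_condensed_XYX_append (c := .c) (t := .b :: .c :: t) hab hybc
  · simpa [hu] using defined_XYXY_append (t := .c :: t) hab hac hyb
  · simpa [hv] using not_defined_XYXY_append (t := .b :: .c :: t) hab hac hbc hyb

end RankerPaper
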